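/- Let Σ = {1,…,σ} and let A_k be as defined. For every word w over Σ with alph(w) = Σ and universality index ι(w) = k, the number of shortest absent subsequences of w is at most the number of shortest absent subsequences of A_k: |sas(w)| ≤ |sas(A_k)|. -/

import Mathlib

/-!
If every word of length at most `n + 1` over `A` is a subsequence of `w`, then an absent word
`a b v` of length `n + 2` is tightly constrained by the shortest prefix `p` of `w = p w'` that
contains all of `A`: the first occurrence of `b` in `p` is not after that of `a`, and `b v` is
absent from `w'`. So absent words are chains of letters in which each letter is at most the
preceding one in the order of first occurrence in the corresponding prefix.

Counting chains from the right, the number of chains starting at the letter of rank `r` is a sum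
over `r` letters of the counts for `w'`, and it is largest when these are the `r` letters with
the largest counts for `w'`. This gives the recursion `chainBound`, and `sum_cnt_le` proves by
induction that the counts of any `s` letters add up to at most `chainBound (n + 1) s`. The proof
of the induction step uses that an injective choice of `s` ranks in a monotone sequence sums to at
most its `s` top values (`sum_le_top`). In `A_k` consecutive blocks are reversals of each other,
so each block sees the letters with the largest counts first, and the bound is attained
(`le_cnt_altWord`).
-/

/-- The word `v₁ = 1·2···σ` over the alphabet `Σ = {1,…,σ} ⊆ ℕ`. -/
def ascWord (σ : ℕ) : List ℕ := (List.range σ).map (· + 1)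

/-- The word `v₂ = σ·(σ−1)···1`. -/
def descWord (σ : ℕ) : List ℕ := (ascWord σ).reverse

/-- The word `A_k`: `A_{2k−1} = (v₁v₂)^{k−1}v₁` and `A_{2k} = A_{2k−1}·v₂`,
i.e. `k` alternating blocks `v₁, v₂, v₁, …` starting with `v₁`. -/
def Aword (σ k : ℕ) : List ℕ :=
  ((List.range k).map fun i => if i % 2 = 0 then ascWord σ else descWord σ).flatten

/-- `v` is a shortest absent subsequence (SAS) of `w`: `v` is a word over `alph(w)`
which is not a subsequence of `w`, of minimal length with this property. -/
def IsSAS (w v : List ℕ) : Prop :=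
  (∀ a ∈ v, a ∈ w) ∧ ¬ v.Sublist w ∧
    ∀ u : List ℕ, (∀ a ∈ u, a ∈ w) → ¬ u.Sublist w → v.length ≤ u.length

/-- The universality index `ι(w)`: the largest `k` such that every word of length at most `k`
over `alph(w)` is a subsequence of `w`. -/
noncomputable def univIndex (w : List ℕ) : ℕ :=
  sSup {k | ∀ v : List ℕ, (∀ a ∈ v, a ∈ w) → v.length ≤ k → v.Sublist w}

/-! ### Words counted by first letter -/

/-- The finite set of words of length `n` over `A`. -/
def wordsOf (A : Finset ℕ) : ℕ → Finset (List ℕ)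
  | 0 => {[]}
  | n + 1 => (A ×ˢ wordsOf A n).image fun p => p.1 :: p.2

lemma mem_wordsOf {A : Finset ℕ} {n : ℕ} {v : List ℕ} :
    v ∈ wordsOf A n ↔ v.length = n ∧ ∀ a ∈ v, a ∈ A := by
  induction n generalizing v with
  | zero =>
    simp only [wordsOf, Finset.mem_singleton, List.length_eq_zero_iff]
    constructor
    · rintro rfl; simp
    · exact fun h => h.1
  | succ n ih =>
    cases v with
    | nil => simp [wordsOf]
    | cons a v =>
      simp only [wordsOf, Finset.mem_image, Finset.mem_product, Prod.exists, List.cons.injEq,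
        List.length_cons, List.forall_mem_cons, Nat.add_right_cancel_iff]
      constructor
      · rintro ⟨x, y, ⟨hx, hy⟩, rfl, rfl⟩
        exact ⟨(ih.1 hy).1, hx, (ih.1 hy).2⟩
      · rintro ⟨h1, h2, h3⟩
        exact ⟨a, v, ⟨h2, ih.2 ⟨h1, h3⟩⟩, rfl, rfl⟩

/-- Words of length `n + 1` with a given property, counted by their first letter. -/
lemma card_filter_wordsOf_succ (A : Finset ℕ) (n : ℕ) (P : List ℕ → Prop) [DecidablePred P] :
    ((wordsOf A (n + 1)).filter P).card
      = ∑ a ∈ A, ((wordsOf A n).filter fun v => P (a :: v)).card := by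
  simp only [Finset.card_filter]
  rw [wordsOf, Finset.sum_image, Finset.sum_product]
  rintro ⟨a, v⟩ _ ⟨b, u⟩ _ h
  simpa using h

/-- The number of absent words of `w` of length `n + 1` over `A` with first letter `a`. -/
def cnt (A : Finset ℕ) (w : List ℕ) (n a : ℕ) : ℕ :=
  ((wordsOf A n).filter fun v => ¬ (a :: v).Sublist w).card

/-- `w` contains all words of length at most `n` over `A` as subsequences. -/
def IsUniv (A : Finset ℕ) (n : ℕ) (w : List ℕ) : Prop :=
  ∀ v : List ℕ, (∀ a ∈ v, a ∈ A) → v.length ≤ n → v.Sublist w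

/-! ### The extremal recursion and rearrangement -/

/-- The extremal numbers of chains over an alphabet of `N` letters: `chainBound N n r` is the
number of chains of length `n + 1` starting at the letter of rank `r ∈ {1,…,N}`. The `r` letters
with the largest counts one step later are those of ranks `N, N - 1, …, N - r + 1`. -/
def chainBound (N : ℕ) : ℕ → ℕ → ℕ
  | 0, _ => 1
  | n + 1, r => ∑ t ∈ Finset.range r, chainBound N n (N - t)

lemma chainBound_mono (N n : ℕ) : Monotone (chainBound N n) := by
  cases n with
  | zero => intro a b _; simp [chainBound]
  | succ n =>
    intro a b h
    simp only [chainBound]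
    exact Finset.sum_le_sum_of_subset (Finset.range_subset_range.2 h)

lemma sum_le_top_aux (f : ℕ → ℕ) (hf : Monotone f) (s : ℕ) :
    ∀ (N : ℕ) (R : Finset ℕ), R.card = s → (∀ x ∈ R, x ≤ N) →
      ∑ x ∈ R, f x ≤ ∑ t ∈ Finset.range s, f (N - t) := by
  induction s with
  | zero => intro N R hR _; simp [Finset.card_eq_zero.1 hR]
  | succ s ih =>
    intro N R hR hN
    have hne : R.Nonempty := Finset.card_pos.1 (by omega)
    have hm := R.max'_mem hne
    rw [← Finset.add_sum_erase R f hm, Finset.sum_range_succ', add_comm]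
    refine Nat.add_le_add ?_ (hf (hN _ hm))
    refine (ih (N - 1) (R.erase (R.max' hne)) ?_ ?_).trans_eq ?_
    · rw [Finset.card_erase_of_mem hm]; omega
    · intro x hx
      have h1 := Finset.lt_max'_of_mem_erase_max' R hne hx
      have h2 := hN _ hm
      omega
    · refine Finset.sum_congr rfl fun t _ => ?_
      congr 1
      omega

/-- Distinct values of a monotone sequence at arguments at most `N` sum to at most the sum of as
many top values. -/
lemma sum_le_top (f : ℕ → ℕ) (hf : Monotone f) (N : ℕ) (S : Finset ℕ) (r : ℕ → ℕ)
    (hr : Set.InjOn r S) (hN : ∀ x ∈ S, r x ≤ N) :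
    ∑ x ∈ S, f (r x) ≤ ∑ t ∈ Finset.range S.card, f (N - t) := by
  rw [← Finset.sum_image (f := f) hr]
  refine sum_le_top_aux f hf _ N _ (Finset.card_image_of_injOn hr) ?_
  simpa using hN

/-! ### Upper bound for an arbitrary universal word -/

/-- A word containing all of `A` has a shortest prefix `p ++ [c]` containing all of `A`; its
last letter `c` occurs in it only once. -/
lemma exists_arch {A : Finset ℕ} (hA : A.Nonempty) (w : List ℕ) :
    (∀ a ∈ A, a ∈ w) →
      ∃ p c w', w = p ++ c :: w' ∧ c ∉ p ∧ c ∈ A ∧ ∀ a ∈ A, a ∈ p ++ [c] := by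
  induction w using List.reverseRecOn with
  | nil => intro h; obtain ⟨a, ha⟩ := hA; simpa using h a ha
  | append_singleton u x ih =>
    intro h
    by_cases hu : ∀ a ∈ A, a ∈ u
    · obtain ⟨p, c, w', rfl, h1, h2, h3⟩ := ih hu
      exact ⟨p, c, w' ++ [x], by simp, h1, h2, h3⟩
    · push Not at hu
      obtain ⟨a, ha, hau⟩ := hu
      have hax : a = x := by
        have := h a ha
        simp only [List.mem_append, List.mem_singleton] at this
        tauto
      subst hax
      exact ⟨u, a, [], by simp, hau, ha, h⟩

lemma sublist_of_cons_sublist {c : ℕ} {v w' : List ℕ} (p : List ℕ) (hc : c ∉ p)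
    (h : (c :: v).Sublist (p ++ c :: w')) : v.Sublist w' := by
  induction p with
  | nil => simpa using h
  | cons x p ih =>
    simp only [List.mem_cons, not_or] at hc
    cases h with
    | cons _ h => exact ih hc.2 h
    | cons_cons _ h => exact absurd rfl hc.1

lemma pair_sublist_of_idxOf_lt {a b : ℕ} (p : List ℕ) (hb : b ∈ p)
    (h : p.idxOf a < p.idxOf b) : [a, b].Sublist p := by
  induction p with
  | nil => simp at hb
  | cons x p ih =>
    have hxb : x ≠ b := by rintro rfl; simp at h
    have hbp : b ∈ p := by simpa [Ne.symm hxb] using hb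
    by_cases hxa : x = a
    · subst hxa
      simpa using hbp
    · rw [List.idxOf_cons_ne _ hxa, List.idxOf_cons_ne _ hxb] at h
      exact (ih hbp (by omega)).cons x

/-- The first-occurrence rank, within `A`, of the letter `a` in `p`. -/
def rk (A : Finset ℕ) (p : List ℕ) (a : ℕ) : ℕ :=
  (A.filter fun b => p.idxOf b ≤ p.idxOf a).card

lemma rk_injOn {A : Finset ℕ} {p : List ℕ} (hp : ∀ a ∈ A, a ∈ p) : Set.InjOn (rk A p) A := by
  have key : ∀ a ∈ A, ∀ b ∈ A, rk A p a = rk A p b → p.idxOf a ≤ p.idxOf b → a = b := by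
    intro a ha b hb hab hle
    have hsub : (A.filter fun x => p.idxOf x ≤ p.idxOf a)
        ⊆ A.filter fun x => p.idxOf x ≤ p.idxOf b :=
      Finset.monotone_filter_right A fun x _ hx => hx.trans hle
    have heq := Finset.eq_of_subset_of_card_le hsub hab.ge
    have hmem : b ∈ A.filter fun x => p.idxOf x ≤ p.idxOf a := by
      rw [heq]; simp [hb]
    exact (List.idxOf_inj (hp a ha)).1 (le_antisymm hle (Finset.mem_filter.1 hmem).2)
  intro a ha b hb hab
  rcases le_total (p.idxOf a) (p.idxOf b) with h | h
  · exact key a ha b hb hab h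
  · exact (key b hb a ha hab.symm h).symm

/-- Only letters whose first occurrence in `p` is not after that of `a` can follow `a` in an
absent word. -/
lemma cnt_succ_le {A : Finset ℕ} {n : ℕ} {p w' : List ℕ} (hp : ∀ a ∈ A, a ∈ p)
    (hw : IsUniv A n w') {a : ℕ} (ha : a ∈ A) :
    cnt A (p ++ w') (n + 1) a
      ≤ ∑ b ∈ A.filter (fun b => p.idxOf b ≤ p.idxOf a), cnt A w' n b := by
  rw [cnt, card_filter_wordsOf_succ, Finset.sum_filter]
  refine Finset.sum_le_sum fun b hb => ?_
  split_ifs with hle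
  · refine Finset.card_le_card (Finset.monotone_filter_right _ fun v _ hv hbv => hv ?_)
    exact (List.singleton_sublist.2 (hp a ha)).append hbv
  · rw [Nat.le_zero, Finset.card_eq_zero, Finset.filter_eq_empty_iff]
    intro v hv
    rw [not_not]
    obtain ⟨h1, h2⟩ := mem_wordsOf.1 hv
    exact (pair_sublist_of_idxOf_lt p (hp b hb) (by omega)).append (hw v h2 h1.le)

/-- The counts for any set `S` of first letters are dominated by those of the top `S.card`
letters of the extremal word. -/
lemma sum_cnt_le {A : Finset ℕ} (hA : A.Nonempty) (n : ℕ) :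
    ∀ w : List ℕ, IsUniv A n w → ∀ S ⊆ A,
      ∑ a ∈ S, cnt A w n a ≤ chainBound A.card (n + 1) S.card := by
  induction n with
  | zero =>
    intro w _ S _
    simp only [chainBound, Finset.sum_const, Finset.card_range, smul_eq_mul, mul_one]
    refine (Finset.sum_le_card_nsmul S _ 1 fun a _ => ?_).trans_eq (by simp)
    exact (Finset.card_filter_le _ _).trans (by simp [wordsOf])
  | succ n ih =>
    intro w hw S hS
    obtain ⟨q, c, w', rfl, hcq, hcA, hq⟩ := exists_arch hA w fun a ha =>
      List.singleton_sublist.1 (hw [a] (by simpa using ha) (by simp))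
    have hw' : IsUniv A n w' := by
      intro v hv hn
      refine sublist_of_cons_sublist q hcq (hw (c :: v) ?_ (by simpa using hn))
      simpa using ⟨hcA, hv⟩
    have hsplit : q ++ c :: w' = (q ++ [c]) ++ w' := by simp
    rw [hsplit]
    generalize q ++ [c] = p at hq
    calc ∑ a ∈ S, cnt A (p ++ w') (n + 1) a
        ≤ ∑ a ∈ S, chainBound A.card (n + 1) (rk A p a) :=
          Finset.sum_le_sum fun a ha =>
            (cnt_succ_le hq hw' (hS ha)).trans (ih w' hw' _ (Finset.filter_subset _ _))
      _ ≤ _ := sum_le_top _ (chainBound_mono _ _) A.card S (rk A p)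
          ((rk_injOn hq).mono hS) fun a _ => Finset.card_filter_le _ _

/-! ### The alternating word attains the bound -/

/-- The alternating word with `n` blocks, starting with an ascending block if `b` is true and with
a descending block otherwise. -/
def altWord (σ : ℕ) : Bool → ℕ → List ℕ
  | _, 0 => []
  | b, n + 1 => (if b then ascWord σ else descWord σ) ++ altWord σ (!b) n

lemma altWord_eq (σ n : ℕ) : ∀ c : ℕ,
    ((List.range n).map fun i => if (i + c) % 2 = 0 then ascWord σ else descWord σ).flatten
      = altWord σ (decide (c % 2 = 0)) n := by
  induction n with
  | zero => intro c; rfl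
  | succ n ih =>
    intro c
    rw [List.range_succ_eq_map, List.map_cons, List.flatten_cons, List.map_map, altWord]
    have hb : (!decide (c % 2 = 0)) = decide ((c + 1) % 2 = 0) := by
      rw [← decide_not]
      exact decide_eq_decide.2 (by omega)
    rw [hb, ← ih (c + 1)]
    congr 1
    · simp
    · congr 1
      refine List.map_congr_left fun i _ => ?_
      simp only [Function.comp, Nat.succ_eq_add_one, add_assoc, add_comm 1 c]

lemma Aword_eq (σ k : ℕ) : Aword σ k = altWord σ true k := by
  simpa [Aword] using altWord_eq σ k 0

lemma mem_ascWord {σ a : ℕ} : a ∈ ascWord σ ↔ a ∈ Finset.Icc 1 σ := by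
  simp only [ascWord, List.mem_map, List.mem_range, Finset.mem_Icc]
  constructor
  · rintro ⟨x, h, rfl⟩; omega
  · intro h; exact ⟨a - 1, by omega, by omega⟩

lemma mem_block {σ a : ℕ} (b : Bool) :
    a ∈ (if b then ascWord σ else descWord σ) ↔ a ∈ Finset.Icc 1 σ := by
  cases b <;> simp only [descWord, List.mem_reverse, mem_ascWord, if_true, if_false,
    Bool.false_eq_true]

lemma altWord_isUniv (σ n : ℕ) : ∀ b, IsUniv (Finset.Icc 1 σ) n (altWord σ b n) := by
  induction n with
  | zero =>
    intro b v _ hv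
    rw [List.length_eq_zero_iff.1 (Nat.le_zero.1 hv)]
    exact List.nil_sublist _
  | succ n ih =>
    intro b v hv hn
    cases v with
    | nil => exact List.nil_sublist _
    | cons a v =>
      rw [altWord]
      exact (List.singleton_sublist.2 ((mem_block b).2 (hv a (by simp)))).append
        (ih _ v (fun x hx => hv x (by simp [hx])) (by simpa using hn))

lemma mem_altWord {σ n a : ℕ} (b : Bool) (h : a ∈ altWord σ b n) : a ∈ Finset.Icc 1 σ := by
  induction n generalizing b with
  | zero => simp [altWord] at h
  | succ n ih =>
    rw [altWord, List.mem_append, mem_block] at h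
    exact h.elim id (ih _)

/-- The rank of the letter `a` in a block of the given orientation. -/
def blockRank (σ : ℕ) (b : Bool) (a : ℕ) : ℕ := if b then a else σ + 1 - a

lemma ascWord_pairwise (σ : ℕ) : (ascWord σ).Pairwise (· < ·) := by
  rw [ascWord, List.pairwise_map]
  exact List.pairwise_lt_range.imp fun h => by omega

lemma block_pairwise (σ : ℕ) (b : Bool) :
    (if b then ascWord σ else descWord σ).Pairwise
      fun x y => blockRank σ b x < blockRank σ b y := by
  cases b
  · simp only [Bool.false_eq_true, if_false, descWord, List.pairwise_reverse, blockRank]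
    refine (ascWord_pairwise σ).imp_of_mem ?_
    intro x y hx hy h
    rw [mem_ascWord, Finset.mem_Icc] at hx hy
    omega
  · simpa [blockRank] using ascWord_pairwise σ

/-- Within one block the letter following `a` in a subsequence has larger rank. -/
lemma absent_append {p w' : List ℕ} {r : ℕ → ℕ} (hp : p.Pairwise fun x y => r x < r y)
    {a b : ℕ} {v : List ℕ} (hr : r b ≤ r a) (hv : ¬ (b :: v).Sublist w') :
    ¬ (a :: b :: v).Sublist (p ++ w') := by
  intro h
  obtain ⟨l₁, l₂, he, h1, h2⟩ := List.sublist_append_iff.1 h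
  match l₁, he with
  | [], he =>
    rw [List.nil_append] at he
    subst he
    exact hv ((List.sublist_cons_self _ _).trans h2)
  | [x], he =>
    simp only [List.cons_append, List.nil_append, List.cons.injEq] at he
    rw [← he.2] at h2
    exact hv h2
  | x :: y :: l, he =>
    simp only [List.cons_append, List.cons.injEq] at he
    have h3 := hp.sublist h1
    simp only [List.pairwise_cons, List.mem_cons] at h3
    have h4 := h3.1 y (Or.inl rfl)
    rw [← he.1, ← he.2.1] at h4
    omega

/-- Reindexing by rank in the next block, whose ranks are those of the current one reversed. -/
lemma sum_blockRank (σ : ℕ) (b : Bool) (f : ℕ → ℕ) (a : ℕ) (ha : a ∈ Finset.Icc 1 σ) :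
    ∑ x ∈ (Finset.Icc 1 σ).filter (fun x => blockRank σ b x ≤ blockRank σ b a),
        f (blockRank σ (!b) x)
      = ∑ t ∈ Finset.range (blockRank σ b a), f (σ - t) := by
  rw [Finset.mem_Icc] at ha
  symm
  -- The letter of rank `t + 1` in the current block has rank `σ - t` in the next one.
  refine Finset.sum_bij' (fun t _ => blockRank σ b (t + 1)) (fun x _ => blockRank σ b x - 1)
    ?_ ?_ ?_ ?_ ?_
  all_goals
    cases b <;>
    simp only [blockRank, Finset.mem_range, Finset.mem_filter, Finset.mem_Icc, if_true, if_false,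
      Bool.false_eq_true, Bool.not_true, Bool.not_false]
  all_goals intro t ht
  all_goals first | omega | (congr 1; omega)

/-- The alternating word attains the bound. -/
lemma le_cnt_altWord (σ n : ℕ) : ∀ b, ∀ a ∈ Finset.Icc 1 σ,
    chainBound σ n (blockRank σ b a) ≤ cnt (Finset.Icc 1 σ) (altWord σ b n) n a := by
  induction n with
  | zero => intro b a _; simp [chainBound, cnt, wordsOf, altWord]
  | succ n ih =>
    intro b a ha
    rw [chainBound, ← sum_blockRank σ b _ a ha, cnt, card_filter_wordsOf_succ, Finset.sum_filter]
    refine Finset.sum_le_sum fun x hx => ?_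
    split_ifs with hle
    · refine (ih (!b) x hx).trans
        (Finset.card_le_card (Finset.monotone_filter_right _ fun v _ hv => ?_))
      rw [altWord]
      exact absent_append (block_pairwise σ b) hle hv
    · exact Nat.zero_le _

lemma le_sum_cnt_altWord (σ n : ℕ) :
    chainBound σ (n + 1) σ ≤ ∑ a ∈ Finset.Icc 1 σ, cnt (Finset.Icc 1 σ) (altWord σ true n) n a := by
  refine le_trans (le_of_eq ?_) (Finset.sum_le_sum (le_cnt_altWord σ n true))
  rw [chainBound]
  refine Finset.sum_bij' (fun t _ => σ - t) (fun x _ => σ - x) ?_ ?_ ?_ ?_ ?_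
  all_goals simp only [Finset.mem_range, Finset.mem_Icc, blockRank, if_true]
  all_goals intro t ht
  all_goals first | omega | trivial

/-! ### Shortest absent subsequences and the universality index -/

/-- All shortest absent subsequences have the same length, so there are finitely many. -/
lemma finite_sas {w : List ℕ} {A : Finset ℕ} (hw : ∀ a ∈ w, a ∈ A) :
    {v : List ℕ | IsSAS w v}.Finite := by
  rcases Set.eq_empty_or_nonempty {v : List ℕ | IsSAS w v} with h | ⟨u, hu⟩
  · rw [h]; exact Set.finite_empty
  · refine (wordsOf A u.length).finite_toSet.subset fun v hv => ?_
    exact mem_wordsOf.2 ⟨le_antisymm (hv.2.2 u hu.1 hu.2.1) (hu.2.2 v hv.1 hv.2.1),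
      fun a ha => hw a (hv.1 a ha)⟩

/-- The universality index of a word with nonempty alphabet is attained: the set defining it is
bounded by the length of the word. -/
lemma univIndex_spec {w : List ℕ} (hw : w ≠ []) :
    (∀ v : List ℕ, (∀ a ∈ v, a ∈ w) → v.length ≤ univIndex w → v.Sublist w) ∧
    1 ≤ univIndex w ∧
    ∃ v : List ℕ, (∀ a ∈ v, a ∈ w) ∧ v.length = univIndex w + 1 ∧ ¬ v.Sublist w := by
  obtain ⟨c, hc⟩ := List.exists_mem_of_ne_nil w hw
  have hbdd : BddAbove {k | ∀ v : List ℕ, (∀ a ∈ v, a ∈ w) → v.length ≤ k → v.Sublist w} := by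
    refine ⟨w.length, fun k hk => ?_⟩
    have h := (hk (List.replicate k c) (fun a ha => by rwa [List.eq_of_mem_replicate ha])
      (by simp)).length_le
    simpa using h
  have hone : 1 ∈ {k | ∀ v : List ℕ, (∀ a ∈ v, a ∈ w) → v.length ≤ k → v.Sublist w} := by
    intro v hv hn
    match v, hn with
    | [], _ => exact List.nil_sublist _
    | [a], _ => exact List.singleton_sublist.2 (hv a (by simp))
    | _ :: _ :: _, hn => simp at hn
  have hmem : ∀ v : List ℕ, (∀ a ∈ v, a ∈ w) → v.length ≤ univIndex w → v.Sublist w :=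
    Nat.sSup_mem ⟨1, hone⟩ hbdd
  refine ⟨hmem, le_csSup hbdd hone, ?_⟩
  by_contra! hcon
  have hsucc : univIndex w + 1 ≤ univIndex w := by
    refine le_csSup hbdd fun v hv hn => ?_
    rcases Nat.le_succ_iff.1 hn with h | h
    · exact hmem v hv h
    · exact hcon v hv h
  omega

/-- Proposition 3.17: among all words `w` with `alph(w) = Σ = {1,…,σ}` and `ι(w) = k`,
the word `A_k` has the maximal number of shortest absent subsequences. -/
theorem card_sas_le_card_sas_Aword (σ k : ℕ) (hσ : 2 ≤ σ) (w : List ℕ)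
    (halph : ∀ a : ℕ, a ∈ w ↔ a ∈ Finset.Icc 1 σ) (hk : univIndex w = k) :
    Set.ncard {v : List ℕ | IsSAS w v}
      ≤ Set.ncard {v : List ℕ | IsSAS (Aword σ k) v} := by
  have hA : (Finset.Icc 1 σ).Nonempty := ⟨1, by simp; omega⟩
  have hne : w ≠ [] := List.ne_nil_of_mem ((halph 1).2 (by simp; omega))
  obtain ⟨hu, hk1, u, hul, hulen, huabs⟩ := univIndex_spec hne
  rw [hk] at hu hk1 hulen
  have huniv : IsUniv (Finset.Icc 1 σ) k w := fun v hv hn =>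
    hu v (fun a ha => (halph a).2 (hv a ha)) hn
  have hup : Set.ncard {v : List ℕ | IsSAS w v} ≤ chainBound σ (k + 1) σ := by
    have h1 : {v : List ℕ | IsSAS w v} ⊆
        ↑((wordsOf (Finset.Icc 1 σ) (k + 1)).filter fun v => ¬ v.Sublist w) := by
      intro v hv
      rw [Finset.mem_coe, Finset.mem_filter, mem_wordsOf]
      refine ⟨⟨?_, fun a ha => (halph a).1 (hv.1 a ha)⟩, hv.2.1⟩
      have h2 := hv.2.2 u hul huabs
      have h3 : ¬ v.length ≤ k := fun h => hv.2.1 (hu v hv.1 h)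
      omega
    refine (Set.ncard_le_ncard h1 (Finset.finite_toSet _)).trans ?_
    rw [Set.ncard_coe_finset, card_filter_wordsOf_succ]
    simpa [cnt] using sum_cnt_le hA k w huniv _ subset_rfl
  refine hup.trans ((le_sum_cnt_altWord σ k).trans ?_)
  have hmem : ∀ a, a ∈ Aword σ k ↔ a ∈ Finset.Icc 1 σ := by
    intro a
    rw [Aword_eq]
    refine ⟨mem_altWord true, fun ha => ?_⟩
    exact List.singleton_sublist.1 (altWord_isUniv σ k true [a] (by simpa using ha) (by simpa))
  have hsub : ↑((wordsOf (Finset.Icc 1 σ) (k + 1)).filter fun v => ¬ v.Sublist (Aword σ k)) ⊆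
      {v : List ℕ | IsSAS (Aword σ k) v} := by
    intro v hv
    rw [Finset.mem_coe, Finset.mem_filter, mem_wordsOf] at hv
    refine ⟨fun a ha => (hmem a).2 (hv.1.2 a ha), hv.2, fun x hx hxabs => ?_⟩
    by_contra hlt
    refine hxabs ?_
    rw [Aword_eq]
    exact altWord_isUniv σ k true x (fun a ha => (hmem a).1 (hx a ha)) (by omega)
  have h := Set.ncard_le_ncard hsub (finite_sas fun a ha => (hmem a).1 ha)
  rw [Set.ncard_coe_finset, card_filter_wordsOf_succ] at h
  rwa [← Aword_eq]
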